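/- arXiv:1902.07137 — 6 statements merged into one kernel-verified Lean document; each statement's English description precedes it below -/
import Mathlib

section
/- A point x* = (x_1*,…,x_n*) ∈ (ℝ^d)^n is the minimizer of the sum-of-norms clustering objective if and only if there exist vectors w_ij ∈ ℝ^d for all i ≠ j in {1,…,n} satisfying: w_ij = −w_ji and ‖w_ij‖ ≤ 1 for all i ≠ j; w_ij = (x_i* − x_j*)/‖x_i* − x_j*‖ whenever x_i* ≠ x_j*; and x_i* − a_i + λ·Σ_{j ≠ i} w_ij = 0 for every i = 1,…,n. -/
open Finset

/-- The sum-of-norms clustering objective. -/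
noncomputable def sonObjective {d n : ℕ} (a : Fin n → EuclideanSpace ℝ (Fin d)) (lam : ℝ)
    (x : Fin n → EuclideanSpace ℝ (Fin d)) : ℝ :=
  (1 / 2) * ∑ i, ‖x i - a i‖ ^ 2 + lam * ∑ i, ∑ j, if i < j then ‖x i - x j‖ else 0


theorem son_double {n : ℕ} (F : Fin n → Fin n → ℝ) (hs : ∀ i j, F i j = F j i)
    (h0 : ∀ i, F i i = 0) :
    2 * (∑ i, ∑ j, if i < j then F i j else 0) = ∑ i, ∑ j, F i j := by
  have h1 : (∑ i, ∑ j, if i < j then F i j else 0) = ∑ i, ∑ j, if j < i then F i j else 0 := by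
    rw [Finset.sum_comm]
    refine Finset.sum_congr rfl fun i _ => Finset.sum_congr rfl fun j _ => ?_
    rw [hs]
  rw [two_mul]
  nth_rewrite 2 [h1]
  rw [← Finset.sum_add_distrib]
  refine Finset.sum_congr rfl fun i _ => ?_
  rw [← Finset.sum_add_distrib]
  refine Finset.sum_congr rfl fun j _ => ?_
  rcases lt_trichotomy i j with h | h | h
  · simp [h, h.not_gt]
  · subst h; simp [h0]
  · simp [h, h.not_gt]

theorem son_subgrad {d n : ℕ} (a : Fin n → EuclideanSpace ℝ (Fin d)) (lam : ℝ) (hlam : 0 ≤ lam)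
    (y z : Fin n → EuclideanSpace ℝ (Fin d)) (w : Fin n → Fin n → EuclideanSpace ℝ (Fin d))
    (ha : ∀ i j, w i j = -w j i) (hn : ∀ i j, ‖w i j‖ ≤ 1)
    (hw : ∀ i j, inner ℝ (w i j) (y i - y j) = ‖y i - y j‖) :
    sonObjective a lam y + ∑ i, inner ℝ (y i - a i + lam • ∑ j, w i j) (z i - y i)
      ≤ sonObjective a lam z := by
  have key : ∑ i, ∑ j, ‖y i - y j‖ + 2 * ∑ i, ∑ j, inner ℝ (w i j) (z i - y i)
      ≤ ∑ i, ∑ j, ‖z i - z j‖ := by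
    have h1 : ∑ i, ∑ j, inner ℝ (w i j) (z i - y i)
        = - ∑ i, ∑ j, inner ℝ (w i j) (z j - y j) := by
      rw [Finset.sum_comm, ← Finset.sum_neg_distrib]
      refine Finset.sum_congr rfl fun i _ => ?_
      rw [← Finset.sum_neg_distrib]
      refine Finset.sum_congr rfl fun j _ => ?_
      rw [ha j i, inner_neg_left]
    rw [two_mul]
    nth_rewrite 2 [h1]
    rw [← sub_eq_add_neg, ← Finset.sum_sub_distrib, ← Finset.sum_add_distrib]
    refine Finset.sum_le_sum fun i _ => ?_
    rw [← Finset.sum_sub_distrib, ← Finset.sum_add_distrib]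
    refine Finset.sum_le_sum fun j _ => ?_
    have h2 : inner ℝ (w i j) (z i - z j) ≤ ‖z i - z j‖ := by
      refine (real_inner_le_norm _ _).trans ?_
      exact mul_le_of_le_one_left (norm_nonneg _) (hn i j)
    rw [← hw i j]
    simp only [inner_sub_right] at h2 ⊢
    linarith
  have hy := son_double (fun i j => ‖y i - y j‖) (fun i j => norm_sub_rev _ _) (by simp)
  have hz := son_double (fun i j => ‖z i - z j‖) (fun i j => norm_sub_rev _ _) (by simp)
  have hq : (1 / 2) * ∑ i, ‖y i - a i‖ ^ 2 + ∑ i, inner ℝ (y i - a i) (z i - y i)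
      ≤ (1 / 2) * ∑ i, ‖z i - a i‖ ^ 2 := by
    rw [Finset.mul_sum, Finset.mul_sum, ← Finset.sum_add_distrib]
    refine Finset.sum_le_sum fun i _ => ?_
    have : z i - a i = (y i - a i) + (z i - y i) := by abel
    rw [this, norm_add_sq_real]
    nlinarith [sq_nonneg ‖z i - y i‖]
  have he : ∑ i, inner ℝ (y i - a i + lam • ∑ j, w i j) (z i - y i)
      = ∑ i, inner ℝ (y i - a i) (z i - y i)
        + lam * ∑ i, ∑ j, inner ℝ (w i j) (z i - y i) := by
    rw [Finset.mul_sum, ← Finset.sum_add_distrib]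
    refine Finset.sum_congr rfl fun i _ => ?_
    rw [inner_add_left, real_inner_smul_left, sum_inner]
  unfold sonObjective
  rw [he]
  rw [← hy, ← hz] at key
  have k2 := mul_le_mul_of_nonneg_left key hlam
  linarith

theorem son_quad (A B : ℝ) (hA : 0 ≤ A) (h : ∀ s : ℝ, 0 ≤ s → s ≤ 1 → 0 ≤ 2 * s * B + s ^ 2 * A) :
    0 ≤ B := by
  by_contra! hB
  have hp : 0 < A - B := by linarith
  have h1 := h (-B / (A - B)) (div_nonneg (by linarith) hp.le) ((div_le_one hp).2 (by linarith))
  have h2 : 2 * (-B / (A - B)) * B + (-B / (A - B)) ^ 2 * A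
      = (B ^ 2 * (2 * B - A)) / (A - B) ^ 2 := by
    field_simp; ring
  rw [h2] at h1
  have : (B ^ 2 * (2 * B - A)) / (A - B) ^ 2 < 0 := by
    apply div_neg_of_neg_of_pos
    · exact mul_neg_of_pos_of_neg (sq_pos_of_neg hB) (by linarith)
    · positivity
  linarith

theorem son_unit_norm {d : ℕ} (v : EuclideanSpace ℝ (Fin d)) : ‖‖v‖⁻¹ • v‖ ≤ 1 := by
  rw [norm_smul, norm_inv, norm_norm]
  exact inv_mul_le_one

theorem son_unit_inner {d : ℕ} (v : EuclideanSpace ℝ (Fin d)) :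
    inner ℝ (‖v‖⁻¹ • v) v = ‖v‖ := by
  rw [real_inner_smul_left, real_inner_self_eq_norm_sq]
  by_cases h : ‖v‖ = 0
  · simp [h]
  · field_simp

theorem son_unit_neg {d : ℕ} (u v : EuclideanSpace ℝ (Fin d)) :
    ‖u - v‖⁻¹ • (u - v) = - (‖v - u‖⁻¹ • (v - u)) := by
  rw [norm_sub_rev, ← smul_neg, neg_sub]

/-- feasible multipliers -/
def sonC {d n : ℕ} (x : Fin n → EuclideanSpace ℝ (Fin d)) :
    Set (Fin n → Fin n → EuclideanSpace ℝ (Fin d)) :=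
  {w | (∀ i j, w i j = -w j i) ∧ (∀ i j, ‖w i j‖ ≤ 1) ∧
    ∀ i j, x i ≠ x j → w i j = ‖x i - x j‖⁻¹ • (x i - x j)}

theorem sonC_compact {d n : ℕ} (x : Fin n → EuclideanSpace ℝ (Fin d)) :
    IsCompact (sonC x) := by
  refine Metric.isCompact_of_isClosed_isBounded ?_ ?_
  · have : sonC x = (⋂ i, ⋂ j, {w | w i j = -w j i}) ∩ ((⋂ i, ⋂ j, {w | ‖w i j‖ ≤ 1}) ∩
        ⋂ i, ⋂ j, ⋂ (_ : x i ≠ x j), {w | w i j = ‖x i - x j‖⁻¹ • (x i - x j)}) := by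
      ext w; simp [sonC]
    rw [this]
    refine IsClosed.inter ?_ (IsClosed.inter ?_ ?_)
    · exact isClosed_iInter fun i => isClosed_iInter fun j =>
        isClosed_eq (by fun_prop) (by fun_prop)
    · exact isClosed_iInter fun i => isClosed_iInter fun j =>
        isClosed_le (by fun_prop) (by fun_prop)
    · exact isClosed_iInter fun i => isClosed_iInter fun j => isClosed_iInter fun _ =>
        isClosed_eq (by fun_prop) (by fun_prop)
  · refine (Metric.isBounded_closedBall (x := 0) (r := 1)).subset fun w hw => ?_
    rw [mem_closedBall_zero_iff, pi_norm_le_iff_of_nonneg zero_le_one]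
    intro i
    rw [pi_norm_le_iff_of_nonneg zero_le_one]
    exact hw.2.1 i

theorem sonC_convex {d n : ℕ} (x : Fin n → EuclideanSpace ℝ (Fin d)) :
    Convex ℝ (sonC x) := by
  intro u hu v hv p q hp hq hpq
  refine ⟨fun i j => ?_, fun i j => ?_, fun i j hij => ?_⟩
  · simp only [Pi.add_apply, Pi.smul_apply]
    rw [hu.1 i j, hv.1 i j]
    simp only [smul_neg]; abel
  · simp only [Pi.add_apply, Pi.smul_apply]
    refine (norm_add_le _ _).trans ?_
    rw [norm_smul, norm_smul, Real.norm_of_nonneg hp, Real.norm_of_nonneg hq]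
    nlinarith [hu.2.1 i j, hv.2.1 i j]
  · simp only [Pi.add_apply, Pi.smul_apply]
    rw [hu.2.2 i j hij, hv.2.2 i j hij, ← add_smul, hpq, one_smul]

/-- one-sided limit of subgradients along the direction `h` -/
noncomputable def sonW {d n : ℕ} (x h : Fin n → EuclideanSpace ℝ (Fin d)) (t : ℝ)
    (i j : Fin n) : EuclideanSpace ℝ (Fin d) :=
  open Classical in
  if x i = x j then ‖h i - h j‖⁻¹ • (h i - h j)
  else ‖(x i + t • h i) - (x j + t • h j)‖⁻¹ • ((x i + t • h i) - (x j + t • h j))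

theorem sonW_anti {d n : ℕ} (x h : Fin n → EuclideanSpace ℝ (Fin d)) (t : ℝ) (i j : Fin n) :
    sonW x h t i j = - sonW x h t j i := by
  unfold sonW
  by_cases hx : x i = x j
  · rw [if_pos hx, if_pos hx.symm]; exact son_unit_neg _ _
  · rw [if_neg hx, if_neg (Ne.symm hx)]; exact son_unit_neg _ _

theorem sonW_norm {d n : ℕ} (x h : Fin n → EuclideanSpace ℝ (Fin d)) (t : ℝ) (i j : Fin n) :
    ‖sonW x h t i j‖ ≤ 1 := by
  unfold sonW
  split_ifs <;> exact son_unit_norm _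

theorem sonW_inner {d n : ℕ} (x h : Fin n → EuclideanSpace ℝ (Fin d)) (t : ℝ) (ht : 0 < t)
    (i j : Fin n) :
    inner ℝ (sonW x h t i j) ((x i + t • h i) - (x j + t • h j))
      = ‖(x i + t • h i) - (x j + t • h j)‖ := by
  unfold sonW
  split_ifs with hx
  · have : (x i + t • h i) - (x j + t • h j) = t • (h i - h j) := by
      rw [hx, smul_sub]; abel
    rw [this, real_inner_smul_right, son_unit_inner, norm_smul, Real.norm_of_nonneg ht.le]
  · exact son_unit_inner _

theorem sonW_mem {d n : ℕ} (x h : Fin n → EuclideanSpace ℝ (Fin d)) : sonW x h 0 ∈ sonC x := by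
  refine ⟨sonW_anti x h 0, sonW_norm x h 0, fun i j hij => ?_⟩
  simp [sonW, hij]

theorem sonW_cont {d n : ℕ} (x h : Fin n → EuclideanSpace ℝ (Fin d)) (i j : Fin n) :
    ContinuousAt (fun t => sonW x h t i j) 0 := by
  unfold sonW
  split_ifs with hx
  · exact continuousAt_const
  · have hc : ContinuousAt (fun t : ℝ => (x i + t • h i) - (x j + t • h j)) 0 := by fun_prop
    refine ContinuousAt.smul (ContinuousAt.inv₀ hc.norm ?_) hc
    simpa [sub_eq_zero] using hx

theorem son_dir {d n : ℕ} (a : Fin n → EuclideanSpace ℝ (Fin d)) (lam : ℝ) (hlam : 0 ≤ lam)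
    (x : Fin n → EuclideanSpace ℝ (Fin d))
    (hmin : ∀ y : Fin n → EuclideanSpace ℝ (Fin d), sonObjective a lam x ≤ sonObjective a lam y)
    (h : Fin n → EuclideanSpace ℝ (Fin d)) :
    0 ≤ ∑ i, inner ℝ (x i - a i + lam • ∑ j, sonW x h 0 i j) (h i) := by
  let F : ℝ → ℝ := fun t => ∑ i, inner ℝ ((x i + t • h i) - a i + lam • ∑ j, sonW x h t i j) (h i)
  have hF : ContinuousAt F 0 := by
    refine tendsto_finsetSum _ fun i _ => ?_
    refine ContinuousAt.inner (𝕜 := ℝ)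
      (f := fun t : ℝ => (x i + t • h i) - a i + lam • ∑ j, sonW x h t i j)
      (g := fun _ => h i) ?_ continuousAt_const
    refine ContinuousAt.add (by fun_prop) (ContinuousAt.const_smul ?_ lam)
    exact tendsto_finsetSum _ fun j _ => sonW_cont x h i j
  have hpos : ∀ t : ℝ, 0 < t → 0 ≤ F t := by
    intro t ht
    have h1 := son_subgrad a lam hlam (fun i => x i + t • h i) x (sonW x h t)
      (sonW_anti x h t) (sonW_norm x h t) (sonW_inner x h t ht)
    have h2 := hmin (fun i => x i + t • h i)
    have h3 : ∑ i, inner ℝ ((x i + t • h i) - a i + lam • ∑ j, sonW x h t i j)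
        (x i - (x i + t • h i)) = - (t * F t) := by
      simp only [F]
      rw [Finset.mul_sum, ← Finset.sum_neg_distrib]
      refine Finset.sum_congr rfl fun i _ => ?_
      rw [sub_add_cancel_left, inner_neg_right, real_inner_smul_right]
    rw [h3] at h1
    have : 0 ≤ t * F t := by linarith
    exact nonneg_of_mul_nonneg_right this ht
  have h0 : 0 ≤ F 0 := by
    refine ge_of_tendsto (hF.tendsto.mono_left (nhdsWithin_le_nhds (s := Set.Ioi 0))) ?_
    filter_upwards [self_mem_nhdsWithin] with t ht using hpos t ht
  simpa [F] using h0

theorem son_exists {d n : ℕ} (a : Fin n → EuclideanSpace ℝ (Fin d)) (lam : ℝ) (hlam : 0 ≤ lam)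
    (x : Fin n → EuclideanSpace ℝ (Fin d))
    (hmin : ∀ y : Fin n → EuclideanSpace ℝ (Fin d), sonObjective a lam x ≤ sonObjective a lam y) :
    ∃ w ∈ sonC x, ∀ i, x i - a i + lam • ∑ j, w i j = 0 := by
  obtain ⟨w, hw, hwm⟩ := (sonC_compact x).exists_isMinOn ⟨_, sonW_mem x 0⟩
    (f := fun w => ∑ i, ‖x i - a i + lam • ∑ j, w i j‖ ^ 2)
    (Continuous.continuousOn (by fun_prop))
  refine ⟨w, hw, ?_⟩
  let v : Fin n → EuclideanSpace ℝ (Fin d) := fun i => x i - a i + lam • ∑ j, w i j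
  let w1 := sonW x (fun i => - v i) 0
  let u : Fin n → EuclideanSpace ℝ (Fin d) := fun i => x i - a i + lam • ∑ j, w1 i j
  have hd : 0 ≤ ∑ i, inner ℝ (u i) (- v i) := son_dir a lam hlam x hmin (fun i => - v i)
  have hq : 0 ≤ ∑ i, inner ℝ (v i) (u i - v i) := by
    refine son_quad (∑ i, ‖u i - v i‖ ^ 2) _ (Finset.sum_nonneg fun i _ => sq_nonneg _) ?_
    intro s hs0 hs1
    have hm : (1 - s) • w + s • w1 ∈ sonC x :=
      sonC_convex x hw (sonW_mem x _) (by linarith) hs0 (by ring)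
    have h1 : ∑ i, ‖v i‖ ^ 2 ≤ ∑ i, ‖x i - a i + lam • ∑ j, ((1 - s) • w + s • w1) i j‖ ^ 2 :=
      hwm hm
    have h2 : ∀ i, x i - a i + lam • ∑ j, ((1 - s) • w + s • w1) i j
        = v i + s • (u i - v i) := by
      intro i
      simp only [Pi.add_apply, Pi.smul_apply, Finset.sum_add_distrib, ← Finset.smul_sum, u, v]
      module
    simp only [h2, norm_add_sq_real, Finset.sum_add_distrib, real_inner_smul_right, norm_smul,
      mul_pow, Real.norm_eq_abs, sq_abs, ← Finset.mul_sum] at h1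
    linarith
  have hs : ∑ i, ‖v i‖ ^ 2 ≤ 0 := by
    have : ∑ i, inner ℝ (v i) (u i - v i) = - ∑ i, inner ℝ (u i) (- v i) - ∑ i, ‖v i‖ ^ 2 := by
      rw [← Finset.sum_neg_distrib, ← Finset.sum_sub_distrib]
      refine Finset.sum_congr rfl fun i _ => ?_
      rw [inner_sub_right, inner_neg_right, real_inner_self_eq_norm_sq, real_inner_comm]
      ring
    linarith
  have h0 := (Finset.sum_eq_zero_iff_of_nonneg (fun i _ => sq_nonneg ‖v i‖)).1
    (le_antisymm hs (Finset.sum_nonneg fun i _ => sq_nonneg _))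
  intro i
  have := h0 i (Finset.mem_univ i)
  simpa using this

/-- First-order optimality: `x` is the minimizer of the sum-of-norms objective iff there
exist subgradients `w i j` (`i ≠ j`) with `w i j = -w j i`, `‖w i j‖ ≤ 1`,
`w i j = (x i - x j)/‖x i - x j‖` whenever `x i ≠ x j`, and
`x i - a i + λ·Σ_{j ≠ i} w i j = 0` for every `i`. -/
theorem sonObjective_isMinimizer_iff_subgradient
    (d n : ℕ) (a : Fin n → EuclideanSpace ℝ (Fin d)) (lam : ℝ) (hlam : 0 ≤ lam)
    (x : Fin n → EuclideanSpace ℝ (Fin d)) :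
    (∀ y : Fin n → EuclideanSpace ℝ (Fin d), sonObjective a lam x ≤ sonObjective a lam y) ↔
    ∃ w : Fin n → Fin n → EuclideanSpace ℝ (Fin d),
      (∀ i j, i ≠ j → w i j = -w j i) ∧
      (∀ i j, i ≠ j → ‖w i j‖ ≤ 1) ∧
      (∀ i j, i ≠ j → x i ≠ x j → w i j = ‖x i - x j‖⁻¹ • (x i - x j)) ∧
      (∀ i, x i - a i + lam • ∑ j ∈ univ.erase i, w i j = 0) := by
  constructor
  · intro hmin
    obtain ⟨w, hw, h0⟩ := son_exists a lam hlam x hmin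
    refine ⟨w, fun i j _ => hw.1 i j, fun i j _ => hw.2.1 i j, fun i j _ h => hw.2.2 i j h, ?_⟩
    intro i
    have hii : w i i = 0 := by
      have h := hw.1 i i
      have h2 : (2 : ℝ) • w i i = 0 := by
        rw [two_smul]; nth_rewrite 1 [h]; exact neg_add_cancel _
      exact (smul_eq_zero.1 h2).resolve_left two_ne_zero
    rw [Finset.sum_erase _ hii]
    exact h0 i
  · rintro ⟨w, h1, h2, h3, h4⟩ y
    have hs := son_subgrad a lam hlam x y (fun i j => if i = j then 0 else w i j)
      (by
        intro i j
        by_cases h : i = j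
        · simp [h]
        · simp only [if_neg h, if_neg (Ne.symm h)]; exact h1 i j h)
      (by
        intro i j
        by_cases h : i = j
        · simp [h]
        · simp only [if_neg h]; exact h2 i j h)
      (by
        intro i j
        by_cases h : i = j
        · simp [h]
        · simp only [if_neg h]
          by_cases hx : x i = x j
          · simp [hx]
          · rw [h3 i j h hx]; exact son_unit_inner _)
    have h5 : ∀ i, ∑ j, (if i = j then 0 else w i j) = ∑ j ∈ univ.erase i, w i j := by
      intro i
      rw [← Finset.sum_erase (a := i) _ (by simp)]
      refine Finset.sum_congr rfl fun j hj => ?_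
      rw [if_neg (Finset.ne_of_mem_erase hj).symm]
    simp only [h5, h4, inner_zero_left, Finset.sum_const_zero, add_zero] at hs
    exact hs
end

section
/- (Cluster characterization, sufficient condition.) Let C be a nonempty subset of {1,…,n} and λ > 0. Suppose there exist vectors z_ij* ∈ ℝ^d for i, j ∈ C with i ≠ j such that: a_i − (1/|C|)·Σ_{l∈C} a_l = λ·Σ_{j∈C∖{i}} z_ij* for all i ∈ C; ‖z_ij*‖ ≤ 1 for all i ≠ j in C; and z_ij* = −z_ji* for all i ≠ j in C. Then there exists x̂ ∈ ℝ^d such that the minimizer x* = (x_1*,…,x_n*) of the sum-of-norms clustering objective satisfies x_i* = x̂ for all i ∈ C (i.e., all points of C lie in the same cluster). -/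
open Finset

theorem aux_half {n : ℕ} (g : Fin n → Fin n → ℝ) (hs : ∀ i j, g i j = g j i) (h0 : ∀ i, g i i = 0) :
    (∑ i, ∑ j, if i < j then g i j else 0) = (1 / 2) * ∑ i, ∑ j, g i j := by
  have h1 : (∑ i, ∑ j, if i < j then g i j else 0) = ∑ i, ∑ j, if j < i then g i j else 0 := by
    rw [Finset.sum_comm]
    refine Finset.sum_congr rfl fun i _ => Finset.sum_congr rfl fun j _ => ?_
    rw [hs j i]
  have h2 : ∑ i, ∑ j, g i j = (∑ i, ∑ j, if i < j then g i j else 0)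
      + ∑ i, ∑ j, if j < i then g i j else 0 := by
    rw [← Finset.sum_add_distrib]
    refine Finset.sum_congr rfl fun i _ => ?_
    rw [← Finset.sum_add_distrib]
    refine Finset.sum_congr rfl fun j _ => ?_
    rcases lt_trichotomy i j with h | h | h
    · simp [h, h.not_gt]
    · subst h; simp [h0]
    · simp [h, h.not_gt]
  rw [h2, ← h1]; ring

theorem aux_split {n : ℕ} (g : Fin n → Fin n → ℝ) (hs : ∀ i j, g i j = g j i) (C : Finset (Fin n)) :
    ∑ i, ∑ j, g i j = (∑ i ∈ C, ∑ j ∈ C, g i j) + 2 * (∑ k ∈ Cᶜ, ∑ i ∈ C, g i k)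
      + ∑ i ∈ Cᶜ, ∑ j ∈ Cᶜ, g i j := by
  have h : ∀ i, ∑ j, g i j = ∑ j ∈ C, g i j + ∑ j ∈ Cᶜ, g i j :=
    fun i => (Finset.sum_add_sum_compl C _).symm
  rw [← Finset.sum_add_sum_compl C]
  simp only [h, Finset.sum_add_distrib]
  have h1 : ∑ i ∈ C, ∑ j ∈ Cᶜ, g i j = ∑ k ∈ Cᶜ, ∑ i ∈ C, g i k := Finset.sum_comm
  have h2 : ∑ i ∈ Cᶜ, ∑ j ∈ C, g i j = ∑ k ∈ Cᶜ, ∑ i ∈ C, g i k :=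
    Finset.sum_congr rfl fun i _ => Finset.sum_congr rfl fun j _ => hs i j
  rw [h1, h2]; ring

/-- Cluster characterization, sufficient condition (Chiquet et al.): if the multiplier
system is solvable for `C`, then all points of `C` lie in the same cluster of the
minimizer. -/
theorem cluster_characterization_sufficient
    (d n : ℕ) (a : Fin n → EuclideanSpace ℝ (Fin d)) (lam : ℝ) (hlam : 0 < lam)
    (C : Finset (Fin n)) (hC : C.Nonempty)
    (z : Fin n → Fin n → EuclideanSpace ℝ (Fin d))
    (hz1 : ∀ i ∈ C, a i - (C.card : ℝ)⁻¹ • ∑ l ∈ C, a l = lam • ∑ j ∈ C.erase i, z i j)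
    (hz2 : ∀ i ∈ C, ∀ j ∈ C, i ≠ j → ‖z i j‖ ≤ 1)
    (hz3 : ∀ i ∈ C, ∀ j ∈ C, i ≠ j → z i j = -z j i)
    (x : Fin n → EuclideanSpace ℝ (Fin d))
    (hx : ∀ y : Fin n → EuclideanSpace ℝ (Fin d), sonObjective a lam x ≤ sonObjective a lam y) :
    ∃ xhat : EuclideanSpace ℝ (Fin d), ∀ i ∈ C, x i = xhat := by
  classical
  have hc : (0 : ℝ) < C.card := by exact_mod_cast hC.card_pos
  set ab := (C.card : ℝ)⁻¹ • ∑ l ∈ C, a l with hab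
  set m := (C.card : ℝ)⁻¹ • ∑ l ∈ C, x l with hm
  refine ⟨m, ?_⟩
  have hcm : (C.card : ℝ) • m = ∑ l ∈ C, x l := by
    rw [hm, smul_smul, mul_inv_cancel₀ hc.ne', one_smul]
  have hsum0 : ∑ i ∈ C, (x i - m) = 0 := by
    rw [Finset.sum_sub_distrib, Finset.sum_const, ← hcm, ← Nat.cast_smul_eq_nsmul ℝ, sub_self]
  let w : Fin n → Fin n → EuclideanSpace ℝ (Fin d) := fun i j => if i = j then 0 else z i j
  have hw1 : ∀ i ∈ C, a i - ab = lam • ∑ j ∈ C, w i j := by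
    intro i hi
    rw [hz1 i hi, ← Finset.add_sum_erase C (w i) hi]
    simp only [w, if_true, zero_add]
    congr 1
    refine Finset.sum_congr rfl fun j hj => ?_
    rw [if_neg (Finset.ne_of_mem_erase hj).symm]
  have hw2 : ∀ i ∈ C, ∀ j ∈ C, ‖w i j‖ ≤ 1 := by
    intro i hi j hj
    by_cases h : i = j
    · simp [w, h]
    · simpa [w, h] using hz2 i hi j hj h
  have hw3 : ∀ i ∈ C, ∀ j ∈ C, w j i = - w i j := by
    intro i hi j hj
    by_cases h : i = j
    · simp [w, h]
    · simpa [w, h, Ne.symm h] using hz3 j hj i hi (Ne.symm h)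
  -- the inner product bound
  have hP : 2 * ∑ i ∈ C, inner ℝ (x i - m) (a i - ab)
      ≤ lam * ∑ i ∈ C, ∑ j ∈ C, ‖x i - x j‖ := by
    have e1 : ∑ i ∈ C, inner ℝ (x i - m) (a i - ab)
        = lam * ∑ i ∈ C, ∑ j ∈ C, inner ℝ (x i - m) (w i j) := by
      rw [Finset.mul_sum]
      refine Finset.sum_congr rfl fun i hi => ?_
      rw [hw1 i hi, inner_smul_right, inner_sum]
    have e2 : ∑ i ∈ C, ∑ j ∈ C, inner ℝ (x i - m) (w i j)
        = ∑ i ∈ C, ∑ j ∈ C, - inner ℝ (x j - m) (w i j) := by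
      rw [Finset.sum_comm]
      refine Finset.sum_congr rfl fun i hi => Finset.sum_congr rfl fun j hj => ?_
      rw [hw3 i hi j hj, inner_neg_right]
    have e3 : 2 * ∑ i ∈ C, ∑ j ∈ C, inner ℝ (x i - m) (w i j)
        ≤ ∑ i ∈ C, ∑ j ∈ C, ‖x i - x j‖ := by
      rw [two_mul]
      nth_rewrite 2 [e2]
      rw [← Finset.sum_add_distrib]
      refine Finset.sum_le_sum fun i hi => ?_
      rw [← Finset.sum_add_distrib]
      refine Finset.sum_le_sum fun j hj => ?_
      rw [← sub_eq_add_neg, ← inner_sub_left, sub_sub_sub_cancel_right]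
      calc inner ℝ (x i - x j) (w i j) ≤ ‖x i - x j‖ * ‖w i j‖ := real_inner_le_norm _ _
        _ ≤ ‖x i - x j‖ * 1 := by gcongr; exact hw2 i hi j hj
        _ = _ := mul_one _
    rw [e1]
    nlinarith
  have hQ : ∑ i ∈ C, ‖x i - a i‖ ^ 2 = ∑ i ∈ C, ‖m - a i‖ ^ 2 + ∑ i ∈ C, ‖x i - m‖ ^ 2
      - 2 * ∑ i ∈ C, inner ℝ (x i - m) (a i - ab) := by
    have e0 : ∑ i ∈ C, inner ℝ (x i - m) (m - ab) = 0 := by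
      rw [← sum_inner, hsum0, inner_zero_left]
    have e1 : ∀ i ∈ C, ‖x i - a i‖ ^ 2 = ‖m - a i‖ ^ 2 + ‖x i - m‖ ^ 2
        - 2 * inner ℝ (x i - m) (a i - ab) + 2 * inner ℝ (x i - m) (m - ab) := by
      intro i _
      have : x i - a i = (x i - m) + (m - a i) := by abel
      rw [this, norm_add_sq_real]
      have : m - a i = (m - ab) - (a i - ab) := by abel
      nth_rewrite 1 [this]
      rw [inner_sub_right]; ring
    rw [Finset.sum_congr rfl e1, Finset.sum_add_distrib, Finset.sum_sub_distrib,
      Finset.sum_add_distrib, ← Finset.mul_sum, ← Finset.mul_sum, e0]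
    ring
  let y : Fin n → EuclideanSpace ℝ (Fin d) := fun i => if i ∈ C then m else x i
  have hyC : ∀ i ∈ C, y i = m := fun i hi => by simp [y, hi]
  have hyN : ∀ i ∈ Cᶜ, y i = x i := fun i hi => by
    simp [y, Finset.mem_compl.mp hi]
  have hR : ∑ k ∈ Cᶜ, ∑ i ∈ C, ‖y i - y k‖ ≤ ∑ k ∈ Cᶜ, ∑ i ∈ C, ‖x i - x k‖ := by
    refine Finset.sum_le_sum fun k hk => ?_
    have e1 : ∑ i ∈ C, ‖y i - y k‖ = ‖∑ i ∈ C, (x i - x k)‖ := by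
      rw [Finset.sum_congr rfl (fun i hi => by rw [hyC i hi, hyN k hk] :
        ∀ i ∈ C, ‖y i - y k‖ = ‖m - x k‖), Finset.sum_const, Finset.sum_sub_distrib,
        Finset.sum_const, ← hcm, ← Nat.cast_smul_eq_nsmul ℝ, ← Nat.cast_smul_eq_nsmul ℝ,
        ← smul_sub, norm_smul, smul_eq_mul, Real.norm_of_nonneg hc.le]
    rw [e1]
    exact norm_sum_le _ _
  have hf : ∀ u : Fin n → EuclideanSpace ℝ (Fin d), sonObjective a lam u =
      (1 / 2) * (∑ i ∈ C, ‖u i - a i‖ ^ 2 + ∑ i ∈ Cᶜ, ‖u i - a i‖ ^ 2)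
      + lam * ((1 / 2) * ((∑ i ∈ C, ∑ j ∈ C, ‖u i - u j‖)
        + 2 * (∑ k ∈ Cᶜ, ∑ i ∈ C, ‖u i - u k‖) + ∑ i ∈ Cᶜ, ∑ j ∈ Cᶜ, ‖u i - u j‖)) := by
    intro u
    unfold sonObjective
    rw [aux_half (fun i j => ‖u i - u j‖) (fun i j => norm_sub_rev _ _) (fun i => by simp),
      aux_split (fun i j => ‖u i - u j‖) (fun i j => norm_sub_rev _ _) C,
      Finset.sum_add_sum_compl]
  have h := hx y
  rw [hf x, hf y] at h
  have y1 : ∑ i ∈ C, ‖y i - a i‖ ^ 2 = ∑ i ∈ C, ‖m - a i‖ ^ 2 :=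
    Finset.sum_congr rfl fun i hi => by rw [hyC i hi]
  have y2 : ∑ i ∈ Cᶜ, ‖y i - a i‖ ^ 2 = ∑ i ∈ Cᶜ, ‖x i - a i‖ ^ 2 :=
    Finset.sum_congr rfl fun i hi => by rw [hyN i hi]
  have y3 : ∑ i ∈ C, ∑ j ∈ C, ‖y i - y j‖ = 0 :=
    Finset.sum_eq_zero fun i hi => Finset.sum_eq_zero fun j hj => by
      rw [hyC i hi, hyC j hj, sub_self, norm_zero]
  have y4 : ∑ i ∈ Cᶜ, ∑ j ∈ Cᶜ, ‖y i - y j‖ = ∑ i ∈ Cᶜ, ∑ j ∈ Cᶜ, ‖x i - x j‖ :=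
    Finset.sum_congr rfl fun i hi => Finset.sum_congr rfl fun j hj => by
      rw [hyN i hi, hyN j hj]
  rw [y1, y2, y3, y4, hQ] at h
  have hR' := mul_le_mul_of_nonneg_left hR hlam.le
  have hle : ∑ i ∈ C, ‖x i - m‖ ^ 2 ≤ 0 := by linarith
  have heq := le_antisymm hle (Finset.sum_nonneg fun i _ => sq_nonneg _)
  rw [Finset.sum_eq_zero_iff_of_nonneg (fun i _ => sq_nonneg _)] at heq
  intro i hi
  have := heq i hi
  rw [sq_eq_zero_iff, norm_eq_zero, sub_eq_zero] at this
  exact this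
end

section
/- (Diameter criterion for a cluster.) Let λ > 0 and let C ⊆ {1,…,n} be nonempty. If ‖a_i − a_j‖ ≤ λ·|C| for all i, j ∈ C, then there exists x̂ ∈ ℝ^d such that the minimizer x* = (x_1*,…,x_n*) of the sum-of-norms clustering objective satisfies x_i* = x̂ for all i ∈ C; that is, all points of C lie in the same cluster. -/
open Finset

lemma son_half {n : ℕ} (D : Fin n → Fin n → ℝ) (hs : ∀ i j, D i j = D j i) (h0 : ∀ i, D i i = 0) :
    ∑ i, ∑ j, (if i < j then D i j else 0) = (1 / 2) * ∑ i, ∑ j, D i j := by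
  have h1 : ∑ i, ∑ j, (if i < j then D i j else 0) = ∑ i, ∑ j, (if j < i then D i j else 0) := by
    rw [Finset.sum_comm]
    refine Finset.sum_congr rfl fun i _ => Finset.sum_congr rfl fun j _ => ?_
    rw [hs]
  have h2 : ∑ i, ∑ j, D i j = ∑ i, ∑ j, (if i < j then D i j else 0)
      + ∑ i, ∑ j, (if j < i then D i j else 0) := by
    rw [← Finset.sum_add_distrib]
    refine Finset.sum_congr rfl fun i _ => ?_
    rw [← Finset.sum_add_distrib]
    refine Finset.sum_congr rfl fun j _ => ?_
    rcases lt_trichotomy i j with h | h | h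
    · simp [h, h.not_gt]
    · subst h; simp [h0]
    · simp [h, h.not_gt]
  linarith

lemma son_split {n : ℕ} (D : Fin n → Fin n → ℝ) (hs : ∀ i j, D i j = D j i)
    (C : Finset (Fin n)) :
    ∑ i, ∑ j, D i j = ∑ i ∈ C, ∑ j ∈ C, D i j + 2 * ∑ j ∈ Cᶜ, ∑ i ∈ C, D i j
      + ∑ i ∈ Cᶜ, ∑ j ∈ Cᶜ, D i j := by
  have e : ∀ i, ∑ j, D i j = ∑ j ∈ C, D i j + ∑ j ∈ Cᶜ, D i j := fun i =>
    (Finset.sum_add_sum_compl C _).symm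
  rw [← Finset.sum_add_sum_compl C]
  simp only [e, Finset.sum_add_distrib]
  have h1 : ∑ i ∈ C, ∑ j ∈ Cᶜ, D i j = ∑ j ∈ Cᶜ, ∑ i ∈ C, D i j := Finset.sum_comm
  have h2 : ∑ i ∈ Cᶜ, ∑ j ∈ C, D i j = ∑ j ∈ Cᶜ, ∑ i ∈ C, D i j :=
    Finset.sum_congr rfl fun i _ => Finset.sum_congr rfl fun j _ => hs _ _
  rw [h1, h2]; ring

/-- Diameter criterion: if `‖a i − a j‖ ≤ λ·|C|` for all `i, j ∈ C`, then all points of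
`C` lie in the same cluster of the minimizer. -/
theorem diameter_criterion
    (d n : ℕ) (a : Fin n → EuclideanSpace ℝ (Fin d)) (lam : ℝ) (hlam : 0 < lam)
    (C : Finset (Fin n)) (hC : C.Nonempty)
    (hdiam : ∀ i ∈ C, ∀ j ∈ C, ‖a i - a j‖ ≤ lam * (C.card : ℝ))
    (x : Fin n → EuclideanSpace ℝ (Fin d))
    (hx : ∀ y : Fin n → EuclideanSpace ℝ (Fin d), sonObjective a lam x ≤ sonObjective a lam y) :
    ∃ xhat : EuclideanSpace ℝ (Fin d), ∀ i ∈ C, x i = xhat := by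
  classical
  have hk : (0 : ℝ) < (C.card : ℝ) := by exact_mod_cast hC.card_pos
  obtain ⟨m, hm⟩ : ∃ m : EuclideanSpace ℝ (Fin d), (C.card : ℝ) • m = ∑ i ∈ C, x i :=
    ⟨(C.card : ℝ)⁻¹ • ∑ i ∈ C, x i, by rw [smul_smul, mul_inv_cancel₀ hk.ne', one_smul]⟩
  set y : Fin n → EuclideanSpace ℝ (Fin d) := fun i => if i ∈ C then m else x i with hy
  have yC : ∀ i ∈ C, y i = m := fun i hi => by simp [hy, hi]
  have yN : ∀ i ∈ Cᶜ, y i = x i := fun i hi => by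
    have : i ∉ C := by simpa using hi
    simp [hy, this]
  have hmain := hx y
  unfold sonObjective at hmain
  rw [son_half (fun i j => ‖x i - x j‖) (fun i j => norm_sub_rev _ _) (by simp),
    son_half (fun i j => ‖y i - y j‖) (fun i j => norm_sub_rev _ _) (by simp),
    son_split (fun i j => ‖x i - x j‖) (fun i j => norm_sub_rev _ _) C,
    son_split (fun i j => ‖y i - y j‖) (fun i j => norm_sub_rev _ _) C,
    ← Finset.sum_add_sum_compl C, ← Finset.sum_add_sum_compl C (fun i => ‖y i - a i‖ ^ 2)] at hmain
  have e1 : ∑ i ∈ Cᶜ, ‖y i - a i‖ ^ 2 = ∑ i ∈ Cᶜ, ‖x i - a i‖ ^ 2 :=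
    Finset.sum_congr rfl fun i hi => by rw [yN i hi]
  have e2 : ∑ i ∈ Cᶜ, ∑ j ∈ Cᶜ, ‖y i - y j‖ = ∑ i ∈ Cᶜ, ∑ j ∈ Cᶜ, ‖x i - x j‖ :=
    Finset.sum_congr rfl fun i hi => Finset.sum_congr rfl fun j hj => by rw [yN i hi, yN j hj]
  have e3 : ∑ i ∈ C, ∑ j ∈ C, ‖y i - y j‖ = 0 :=
    Finset.sum_eq_zero fun i hi => Finset.sum_eq_zero fun j hj => by simp [yC i hi, yC j hj]
  have e4 : ∑ j ∈ Cᶜ, ∑ i ∈ C, ‖y i - y j‖ ≤ ∑ j ∈ Cᶜ, ∑ i ∈ C, ‖x i - x j‖ := by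
    refine Finset.sum_le_sum fun j hj => ?_
    have h1 : ∑ i ∈ C, ‖y i - y j‖ = (C.card : ℝ) * ‖m - x j‖ := by
      rw [Finset.sum_congr rfl (fun i hi => by rw [yC i hi, yN j hj] :
        ∀ i ∈ C, ‖y i - y j‖ = ‖m - x j‖)]
      simp
    have h2 : ∑ i ∈ C, (x i - x j) = (C.card : ℝ) • (m - x j) := by
      rw [Finset.sum_sub_distrib, smul_sub, hm, Finset.sum_const, Nat.cast_smul_eq_nsmul]
    rw [h1]
    calc (C.card : ℝ) * ‖m - x j‖ = ‖∑ i ∈ C, (x i - x j)‖ := by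
          rw [h2, norm_smul, Real.norm_of_nonneg hk.le]
      _ ≤ _ := norm_sum_le _ _
  have e5 : ∑ i ∈ C, ‖y i - a i‖ ^ 2 = ∑ i ∈ C, ‖m - a i‖ ^ 2 :=
    Finset.sum_congr rfl fun i hi => by rw [yC i hi]
  have hz : ∑ i ∈ C, (x i - m) = 0 := by
    rw [Finset.sum_sub_distrib, ← hm, Finset.sum_const, Nat.cast_smul_eq_nsmul, sub_self]
  have e6 : ∑ i ∈ C, ‖x i - a i‖ ^ 2 = ∑ i ∈ C, ‖x i - m‖ ^ 2
      - 2 * ∑ i ∈ C, inner ℝ (x i - m) (a i) + ∑ i ∈ C, ‖m - a i‖ ^ 2 := by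
    have h : ∀ i ∈ C, ‖x i - a i‖ ^ 2 = ‖x i - m‖ ^ 2 - 2 * inner ℝ (x i - m) (a i)
        + ‖m - a i‖ ^ 2 + 2 * inner ℝ (x i - m) m := fun i _ => by
      have : x i - a i = (x i - m) + (m - a i) := by abel
      rw [this, norm_add_sq_real, inner_sub_right]; ring
    rw [Finset.sum_congr rfl h, Finset.sum_add_distrib, Finset.sum_add_distrib,
      Finset.sum_sub_distrib, ← Finset.mul_sum, ← Finset.mul_sum, ← sum_inner, hz, inner_zero_left]
    ring
  have e7 : 2 * (C.card : ℝ) * ∑ i ∈ C, inner ℝ (x i - m) (a i)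
      = ∑ i ∈ C, ∑ j ∈ C, inner ℝ (x i - x j) (a i - a j) := by
    have h : ∀ i j, inner ℝ (x i - x j) (a i - a j) = inner ℝ (x i - m) (a i)
        - inner ℝ (x j - m) (a i) + (inner ℝ (x j - m) (a j) - inner ℝ (x i - m) (a j)) := by
      intro i j
      simp only [inner_sub_left, inner_sub_right]; ring
    simp only [h, Finset.sum_add_distrib, Finset.sum_sub_distrib, Finset.sum_const]
    have h1 : ∑ i ∈ C, ∑ j ∈ C, inner ℝ (x j - m) (a i) = 0 :=
      Finset.sum_eq_zero fun i _ => by rw [← sum_inner, hz, inner_zero_left]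
    have h2 : ∑ i ∈ C, ∑ j ∈ C, inner ℝ (x i - m) (a j) = 0 := by
      rw [Finset.sum_comm]; exact h1
    rw [h1, h2, ← Finset.smul_sum]
    simp only [nsmul_eq_mul]; ring
  have e8 : ∑ i ∈ C, ∑ j ∈ C, inner ℝ (x i - x j) (a i - a j)
      ≤ (C.card : ℝ) * (lam * ∑ i ∈ C, ∑ j ∈ C, ‖x i - x j‖) := by
    simp only [Finset.mul_sum]
    refine Finset.sum_le_sum fun i hi => Finset.sum_le_sum fun j hj => ?_
    calc _ ≤ ‖x i - x j‖ * ‖a i - a j‖ := real_inner_le_norm _ _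
      _ ≤ ‖x i - x j‖ * (lam * (C.card : ℝ)) :=
        mul_le_mul_of_nonneg_left (hdiam i hi j hj) (norm_nonneg _)
      _ = _ := by ring
  have e9 : 2 * ∑ i ∈ C, inner ℝ (x i - m) (a i) ≤ lam * ∑ i ∈ C, ∑ j ∈ C, ‖x i - x j‖ := by
    rw [← e7] at e8
    refine le_of_mul_le_mul_left ?_ hk
    linarith
  have e10 := mul_le_mul_of_nonneg_left e4 hlam.le
  have e11 : ∑ i ∈ C, ‖x i - m‖ ^ 2 ≤ 0 := by
    rw [e1, e2, e3, e5, e6] at hmain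
    linarith
  have e12 : ∑ i ∈ C, ‖x i - m‖ ^ 2 = 0 :=
    le_antisymm e11 (Finset.sum_nonneg fun i _ => by positivity)
  refine ⟨m, fun i hi => ?_⟩
  have := (Finset.sum_eq_zero_iff_of_nonneg (fun i _ => by positivity)).1 e12 i hi
  exact sub_eq_zero.1 (norm_eq_zero.1 (pow_eq_zero_iff (two_ne_zero) |>.1 this))
end

section
/- Let x* = (x_1*,…,x_n*) be the minimizer of the sum-of-norms clustering objective with points a_1,…,a_n ∈ ℝ^d and parameter λ ≥ 0. Then ‖x_i* − a_i‖ ≤ λ·(n − 1) for every i = 1,…,n. -/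
open Finset

/-- The minimizer of the sum-of-norms objective moves each point at most `λ·(n−1)`. -/
theorem minimizer_displacement_bound
    (d n : ℕ) (a : Fin n → EuclideanSpace ℝ (Fin d)) (lam : ℝ) (hlam : 0 ≤ lam)
    (x : Fin n → EuclideanSpace ℝ (Fin d))
    (hx : ∀ y : Fin n → EuclideanSpace ℝ (Fin d), sonObjective a lam x ≤ sonObjective a lam y)
    (i : Fin n) :
    ‖x i - a i‖ ≤ lam * ((n : ℝ) - 1) := by
  set v := x i - a i with hv
  set r := ‖v‖ with hr
  have hr0 : 0 ≤ r := norm_nonneg _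
  have hn : (1 : ℝ) ≤ n := by
    have := i.pos
    exact_mod_cast this
  have key : ∀ t : ℝ, 0 < t → t < 1 →
      (1 / 2) * r ^ 2 * (2 * t - t ^ 2) ≤ lam * ((n - 1) * (t * r)) := by
    intro t ht ht1
    set y : Fin n → EuclideanSpace ℝ (Fin d) := Function.update x i (x i - t • v) with hy
    have hyi : y i = x i - t • v := by simp [hy]
    have hyj : ∀ j, j ≠ i → y j = x j := fun j hj => by simp [hy, hj]
    have hs : ‖t • v‖ = t * r := by rw [norm_smul, Real.norm_of_nonneg ht.le]
    have hs0 : 0 ≤ t * r := by positivity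
    have h := hx y
    unfold sonObjective at h
    have hq : ∑ k, ‖y k - a k‖ ^ 2 = ∑ k, ‖x k - a k‖ ^ 2 + ((1 - t) ^ 2 * r ^ 2 - r ^ 2) := by
      rw [← Finset.add_sum_erase _ _ (Finset.mem_univ i),
        ← Finset.add_sum_erase _ (fun k => ‖x k - a k‖ ^ 2) (Finset.mem_univ i)]
      have h1 : ∑ k ∈ univ.erase i, ‖y k - a k‖ ^ 2 = ∑ k ∈ univ.erase i, ‖x k - a k‖ ^ 2 :=
        Finset.sum_congr rfl fun k hk => by rw [hyj k (Finset.ne_of_mem_erase hk)]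
      have h2 : y i - a i = (1 - t) • v := by
        rw [hyi, sub_smul, one_smul, hv]; abel
      have h3 : ‖y i - a i‖ ^ 2 = (1 - t) ^ 2 * r ^ 2 := by
        rw [h2, norm_smul, Real.norm_of_nonneg (by linarith), mul_pow]
      rw [h1, h3]
      simp only [← hv, ← hr]
      ring
    have hp : (∑ k, ∑ j, if k < j then ‖y k - y j‖ else 0) ≤
        (∑ k, ∑ j, if k < j then ‖x k - x j‖ else 0) + (n - 1) * (t * r) := by
      have hb : (∑ k, ∑ j, if k < j then ‖y k - y j‖ else 0) ≤
          ∑ k, ∑ j, ((if k < j then ‖x k - x j‖ else 0)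
            + (if k = i then (if i < j then t * r else 0) else 0)
            + (if j = i then (if k < i then t * r else 0) else 0)) := by
        refine Finset.sum_le_sum fun k _ => Finset.sum_le_sum fun j _ => ?_
        by_cases hkj : k < j
        · by_cases hk : k = i
          · subst hk
            have hj : j ≠ k := hkj.ne'
            simp only [hkj, hj, if_true, if_false, hyi, hyj j hj]
            have := norm_sub_le (x k - x j) (t • v)
            rw [hs] at this
            rw [sub_right_comm]
            linarith
          · by_cases hj : j = i
            · subst hj
              simp only [hkj, hk, if_true, if_false, hyi, hyj k hk]
              have := norm_add_le (x k - x j) (t • v)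
              rw [hs] at this
              rw [← sub_add]
              linarith
            · simp [hkj, hk, hj, hyj k hk, hyj j hj]
        · simp only [hkj, if_false]
          split_ifs <;> linarith
      refine hb.trans (le_of_eq ?_)
      simp only [Finset.sum_add_distrib]
      rw [add_assoc]
      congr 1
      have e1 : (∑ k : Fin n, ∑ j : Fin n, if k = i then (if i < j then t * r else 0) else 0)
          = ∑ j : Fin n, if i < j then t * r else 0 := by
        rw [Finset.sum_comm]; simp
      have e2 : (∑ k : Fin n, ∑ j : Fin n, if j = i then (if k < i then t * r else 0) else 0)
          = ∑ j : Fin n, if j < i then t * r else 0 := by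
        simp
      rw [e1, e2, ← Finset.sum_add_distrib, ← Finset.add_sum_erase _ _ (Finset.mem_univ i)]
      have e3 : ∑ j ∈ univ.erase i, ((if i < j then t * r else 0) + (if j < i then t * r else 0))
          = ∑ j ∈ univ.erase i, t * r := by
        refine Finset.sum_congr rfl fun j hj => ?_
        rcases lt_or_gt_of_ne (Finset.ne_of_mem_erase hj) with h | h
        · simp [h, h.not_gt]
        · simp [h, h.not_gt]
      rw [e3, Finset.sum_const, Finset.card_erase_of_mem (Finset.mem_univ i)]
      have : 1 ≤ n := i.pos
      simp [Nat.cast_sub this]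
    have hp' := mul_le_mul_of_nonneg_left hp hlam
    rw [hq] at h
    nlinarith
  rcases hr0.eq_or_lt with h0 | h0
  · rw [← h0]
    exact mul_nonneg hlam (by linarith)
  by_contra! hc
  -- choose t small
  have key2 : ∀ t : ℝ, 0 < t → t < 1 → r * (1 - t / 2) ≤ lam * (n - 1) := by
    intro t ht ht1
    have := key t ht ht1
    have h1 : 0 < t * r := by positivity
    refine le_of_mul_le_mul_right ?_ h1
    nlinarith
  have hL : 0 ≤ lam * ((n : ℝ) - 1) := mul_nonneg hlam (by linarith)
  have hd : 0 < (r - lam * (n - 1)) / r := div_pos (by linarith) h0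
  have := key2 (min (1/2) ((r - lam * (n - 1)) / r)) (lt_min (by norm_num) hd)
    (lt_of_le_of_lt (min_le_left _ _) (by norm_num))
  have h2 : r * min (1/2) ((r - lam * (n - 1)) / r) ≤ r - lam * (n - 1) := by
    calc _ ≤ r * ((r - lam * (n - 1)) / r) := by gcongr; exact min_le_right _ _
      _ = _ := by field_simp
  nlinarith
end

section
/- (Separation criterion.) Let x* = (x_1*,…,x_n*) be the minimizer of the sum-of-norms clustering objective with points a_1,…,a_n ∈ ℝ^d and parameter λ ≥ 0. Then for any indices i, i′, one has ‖x_i* − x_{i′}*‖ ≥ ‖a_i − a_{i′}‖ − 2λ·(n − 1). In particular, if λ < ‖a_i − a_{i′}‖/(2(n − 1)) then x_i* ≠ x_{i′}*, i.e., i and i′ lie in different clusters. -/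
open Finset

theorem son_pen {d n : ℕ} (x : Fin n → EuclideanSpace ℝ (Fin d)) (k : Fin n)
    (z : EuclideanSpace ℝ (Fin d)) :
    (∑ i, ∑ j, if i < j then ‖Function.update x k z i - Function.update x k z j‖ else 0) ≤
      (∑ i, ∑ j, if i < j then ‖x i - x j‖ else 0) + ((n : ℝ) - 1) * ‖z - x k‖ := by
  have hcount : (∑ p : Fin n, ∑ q : Fin n, ((if p = k then (if k < q then ‖z - x k‖ else 0) else 0)
      + (if q = k then (if p < k then ‖z - x k‖ else 0) else 0))) = ((n : ℝ) - 1) * ‖z - x k‖ := by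
    simp only [Finset.sum_add_distrib]
    rw [Finset.sum_comm]
    simp only [Finset.sum_ite_eq', Finset.mem_univ, if_true]
    rw [← Finset.sum_add_distrib]
    have : ∀ q : Fin n, ((if k < q then ‖z - x k‖ else 0) + (if q < k then ‖z - x k‖ else 0))
        = ‖z - x k‖ - (if q = k then ‖z - x k‖ else 0) := by
      intro q
      rcases lt_trichotomy q k with h | h | h
      · simp [h, h.ne, h.not_gt]
      · simp [h]
      · simp [h, h.ne', h.not_gt]
    rw [Finset.sum_congr rfl (fun q _ => this q), Finset.sum_sub_distrib]
    simp
    ring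
  rw [← hcount, ← Finset.sum_add_distrib]
  refine Finset.sum_le_sum fun p _ => ?_
  rw [← Finset.sum_add_distrib]
  refine Finset.sum_le_sum fun q _ => ?_
  by_cases hpq : p < q
  · by_cases hp : p = k
    · subst hp
      have hq : q ≠ p := hpq.ne'
      simp only [hpq, hq, if_true, if_false, Function.update_self, ne_eq, not_false_eq_true,
        Function.update_of_ne, add_zero]
      have := norm_add_le (x p - x q) (z - x p)
      have e : x p - x q + (z - x p) = z - x q := by abel
      rwa [e] at this
    · by_cases hq : q = k
      · subst hq
        simp only [hpq, hp, if_true, if_false, Function.update_self, ne_eq, not_false_eq_true,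
          Function.update_of_ne, zero_add]
        have := norm_sub_le (x p - x q) (z - x q)
        have e : x p - x q - (z - x q) = x p - z := by abel
        rwa [e] at this
      · simp [hp, hq, hpq]
  · simp only [hpq, if_false, zero_add]
    positivity

theorem son_close {d n : ℕ} (a : Fin n → EuclideanSpace ℝ (Fin d)) (lam : ℝ) (hlam : 0 ≤ lam)
    (x : Fin n → EuclideanSpace ℝ (Fin d))
    (hx : ∀ y : Fin n → EuclideanSpace ℝ (Fin d), sonObjective a lam x ≤ sonObjective a lam y)
    (k : Fin n) : ‖x k - a k‖ ≤ lam * ((n : ℝ) - 1) := by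
  have hn : (1 : ℝ) ≤ n := by exact_mod_cast (Nat.one_le_iff_ne_zero.2 (by have := k.2; omega))
  have hC : 0 ≤ lam * ((n : ℝ) - 1) := mul_nonneg hlam (by linarith)
  have key : ∀ t : ℝ, 0 < t → t < 1 →
      (t - t ^ 2 / 2) * ‖x k - a k‖ ^ 2 ≤ lam * ((n : ℝ) - 1) * (t * ‖x k - a k‖) := by
    intro t ht ht1
    have h := hx (Function.update x k (x k - t • (x k - a k)))
    have hp := son_pen x k (x k - t • (x k - a k))
    have e1 : ‖x k - t • (x k - a k) - x k‖ = t * ‖x k - a k‖ := by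
      rw [show x k - t • (x k - a k) - x k = -(t • (x k - a k)) by abel, norm_neg, norm_smul,
        Real.norm_of_nonneg ht.le]
    have e2 : ‖x k - t • (x k - a k) - a k‖ = (1 - t) * ‖x k - a k‖ := by
      rw [show x k - t • (x k - a k) - a k = (1 - t) • (x k - a k) by module, norm_smul,
        Real.norm_of_nonneg (by linarith)]
    have e3 : ∑ i, ‖Function.update x k (x k - t • (x k - a k)) i - a i‖ ^ 2
        = ∑ i, ‖x i - a i‖ ^ 2 + (((1 - t) * ‖x k - a k‖) ^ 2 - ‖x k - a k‖ ^ 2) := by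
      rw [← Finset.add_sum_erase _ _ (Finset.mem_univ k),
        ← Finset.add_sum_erase _ (fun i => ‖x i - a i‖ ^ 2) (Finset.mem_univ k)]
      rw [Function.update_self, e2, Finset.sum_congr rfl (g := fun i => ‖x i - a i‖ ^ 2)]
      · ring
      · intro i hi
        rw [Function.update_of_ne (Finset.ne_of_mem_erase hi)]
    rw [e1] at hp
    have hp' := mul_le_mul_of_nonneg_left hp hlam
    unfold sonObjective at h
    rw [e3] at h
    linarith
  by_contra! hlt
  set D := ‖x k - a k‖
  set C := lam * ((n : ℝ) - 1)
  have hD : 0 < D := lt_of_le_of_lt hC hlt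
  have hs : 0 < (D - C) / D := div_pos (by linarith) hD
  have hs1 : (D - C) / D ≤ 1 := (div_le_one hD).2 (by linarith)
  have h := key ((D - C) / D / 2) (by linarith) (by linarith)
  set s := (D - C) / D with hsd
  have hsD : s * D = D - C := by rw [hsd]; field_simp
  have h2 : (s / 2 * D) * ((1 - s / 4) * D) ≤ (s / 2 * D) * C := by linarith
  have h3 := le_of_mul_le_mul_left h2 (by positivity)
  nlinarith

/-- Separation criterion: `‖x i − x i′‖ ≥ ‖a i − a i′‖ − 2λ(n−1)`; in particular, if
`λ < ‖a i − a i′‖/(2(n−1))` then `i` and `i′` lie in different clusters. -/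
theorem separation_criterion
    (d n : ℕ) (a : Fin n → EuclideanSpace ℝ (Fin d)) (lam : ℝ) (hlam : 0 ≤ lam)
    (x : Fin n → EuclideanSpace ℝ (Fin d))
    (hx : ∀ y : Fin n → EuclideanSpace ℝ (Fin d), sonObjective a lam x ≤ sonObjective a lam y)
    (i i' : Fin n) :
    ‖a i - a i'‖ - 2 * lam * ((n : ℝ) - 1) ≤ ‖x i - x i'‖ ∧
    (lam < ‖a i - a i'‖ / (2 * ((n : ℝ) - 1)) → x i ≠ x i') := by
  have hn : (1 : ℝ) ≤ n := by exact_mod_cast (Nat.one_le_iff_ne_zero.2 (by have := i.2; omega))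
  have main : ‖a i - a i'‖ - 2 * lam * ((n : ℝ) - 1) ≤ ‖x i - x i'‖ := by
    have h1 := son_close a lam hlam x hx i
    have h2 := son_close a lam hlam x hx i'
    have h3 := norm_add_le (x i - x i' - (x i - a i)) (x i' - a i')
    have h4 := norm_sub_le (x i - x i') (x i - a i)
    have e : x i - x i' - (x i - a i) + (x i' - a i') = a i - a i' := by abel
    rw [e] at h3
    linarith
  refine ⟨main, fun h he => ?_⟩
  rw [he, sub_self, norm_zero] at main
  rcases hn.eq_or_lt with h1 | h1
  · rw [← h1] at h
    simp at h
    linarith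
  · rw [lt_div_iff₀ (by linarith)] at h
    linarith
end

section
/- (Centroid identity for a cluster.) Let x* = (x_1*,…,x_n*) be the minimizer of the sum-of-norms clustering objective with points a_1,…,a_n ∈ ℝ^d and parameter λ > 0. Suppose C ⊆ {1,…,n} is nonempty and x̂ ∈ ℝ^d satisfy x_i* = x̂ for all i ∈ C and x_i* ≠ x̂ for all i ∉ C. Then λ·Σ_{j∉C} (x̂ − x_j*)/‖x̂ − x_j*‖ = −x̂ + (1/|C|)·Σ_{l∈C} a_l. -/
open Finset

theorem aux_norm_deriv {d : ℕ} (u w : EuclideanSpace ℝ (Fin d)) (hu : u ≠ 0) :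
    HasDerivAt (fun t : ℝ => ‖u + t • w‖) (‖u‖⁻¹ * inner ℝ u w) 0 := by
  have h1 : HasDerivAt (fun t : ℝ => u + t • w) w 0 := by
    simpa using ((hasDerivAt_id (0:ℝ)).smul_const w).const_add u
  have h2 := h1.norm_sq
  have hn : ‖u‖ ≠ 0 := norm_ne_zero_iff.mpr hu
  have h3 := h2.sqrt (by simpa using hu)
  have e : (fun t : ℝ => √(‖u + t • w‖ ^ 2)) = fun t : ℝ => ‖u + t • w‖ := by
    funext t; exact Real.sqrt_sq (norm_nonneg _)
  rw [e] at h3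
  convert h3 using 1
  simp only [zero_smul, add_zero, Real.sqrt_sq (norm_nonneg u)]
  field_simp

theorem aux_sym {n : ℕ} (c : Fin n → ℝ) (W : Fin n → Fin n → ℝ)
    (hW : ∀ i j, W j i = - W i j) :
    (∑ i, ∑ j, if i < j then (c i - c j) * W i j else 0) = ∑ i, ∑ j, c i * W i j := by
  have h1 : (∑ i, ∑ j, if i < j then (c i - c j) * W i j else 0)
      = (∑ i, ∑ j, if i < j then c i * W i j else 0)
        + ∑ i, ∑ j, if j < i then c i * W i j else 0 := by
    rw [Finset.sum_comm (f := fun i j => if j < i then c i * W i j else 0),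
      ← Finset.sum_add_distrib]
    refine Finset.sum_congr rfl fun i _ => ?_
    rw [← Finset.sum_add_distrib]
    refine Finset.sum_congr rfl fun j _ => ?_
    split_ifs
    · rw [hW i j]; ring
    · simp
  rw [h1, ← Finset.sum_add_distrib]
  refine Finset.sum_congr rfl fun i _ => ?_
  rw [← Finset.sum_add_distrib]
  refine Finset.sum_congr rfl fun j _ => ?_
  rcases lt_trichotomy i j with h | h | h
  · simp [h, h.not_gt]
  · subst h
    have : W i i = 0 := by linarith [hW i i]
    simp [this]
  · simp [h, h.not_gt]

/-- Centroid identity for a cluster: if `C` is exactly one cluster with common value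
`x̂`, then `λ·Σ_{j∉C} (x̂ − x_j*)/‖x̂ − x_j*‖ = −x̂ + (1/|C|)·Σ_{l∈C} a_l`. -/
theorem centroid_identity
    (d n : ℕ) (a : Fin n → EuclideanSpace ℝ (Fin d)) (lam : ℝ) (hlam : 0 < lam)
    (x : Fin n → EuclideanSpace ℝ (Fin d))
    (hx : ∀ y : Fin n → EuclideanSpace ℝ (Fin d), sonObjective a lam x ≤ sonObjective a lam y)
    (C : Finset (Fin n)) (hC : C.Nonempty) (xhat : EuclideanSpace ℝ (Fin d))
    (hin : ∀ i ∈ C, x i = xhat) (hout : ∀ i ∉ C, x i ≠ xhat) :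
    lam • ∑ j ∈ Cᶜ, ‖xhat - x j‖⁻¹ • (xhat - x j) =
      -xhat + (C.card : ℝ)⁻¹ • ∑ l ∈ C, a l := by
  have hk : (C.card : ℝ) ≠ 0 := by
    exact_mod_cast hC.card_pos.ne'
  set U := ∑ j ∈ Cᶜ, ‖xhat - x j‖⁻¹ • (xhat - x j) with hU
  have key : ∀ v : EuclideanSpace ℝ (Fin d),
      (∑ i ∈ C, inner ℝ (xhat - a i) v) + lam * ((C.card : ℝ) * inner ℝ U v) = 0 := by
    intro v
    let c : Fin n → ℝ := fun i => if i ∈ C then 1 else 0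
    let W : Fin n → Fin n → ℝ := fun i j => ‖x i - x j‖⁻¹ * inner ℝ (x i - x j) v
    have hW : ∀ i j, W j i = - W i j := by
      intro i j
      simp only [W]
      rw [norm_sub_rev, ← neg_sub (x i) (x j), inner_neg_left, mul_neg]
    have hq : ∀ i, HasDerivAt (fun t : ℝ => ‖(x i + t • c i • v) - a i‖ ^ 2)
        (2 * (c i * inner ℝ (x i - a i) v)) 0 := by
      intro i
      have h1 : HasDerivAt (fun t : ℝ => (x i + t • c i • v) - a i) (c i • v) 0 := by
        simpa using (((hasDerivAt_id (0:ℝ)).smul_const (c i • v)).const_add (x i)).sub_const (a i)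
      have h2 := h1.norm_sq
      simpa [inner_smul_right] using h2
    have hp : ∀ i j, HasDerivAt
        (fun t : ℝ => if i < j then ‖(x i + t • c i • v) - (x j + t • c j • v)‖ else 0)
        (if i < j then (c i - c j) * W i j else 0) 0 := by
      intro i j
      split_ifs with hij
      · have e : ∀ t : ℝ, (x i + t • c i • v) - (x j + t • c j • v)
            = (x i - x j) + t • ((c i - c j) • v) := by
          intro t; module
        simp only [e]
        by_cases hc : c i = c j
        · simpa [hc] using hasDerivAt_const (0:ℝ) ‖x i - x j‖
        · have hne : x i - x j ≠ 0 := by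
            intro h
            rw [sub_eq_zero] at h
            apply hc
            by_cases hi : i ∈ C <;> by_cases hj : j ∈ C
            · simp [c, hi, hj]
            · exact absurd (h ▸ hin i hi) (hout j hj)
            · exact absurd (h.trans (hin j hj)) (hout i hi)
            · simp [c, hi, hj]
          have := aux_norm_deriv (x i - x j) ((c i - c j) • v) hne
          convert this using 1
          simp only [W, inner_smul_right]; ring
      · exact hasDerivAt_const _ _
    have hd : HasDerivAt (fun t : ℝ => sonObjective a lam (fun i => x i + t • c i • v))
        ((1 / 2) * ∑ i, 2 * (c i * inner ℝ (x i - a i) v)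
          + lam * ∑ i, ∑ j, if i < j then (c i - c j) * W i j else 0) 0 := by
      unfold sonObjective
      exact ((HasDerivAt.fun_sum fun i _ => hq i).const_mul _).add
        ((HasDerivAt.fun_sum fun i _ => HasDerivAt.fun_sum fun j _ => hp i j).const_mul _)
    have hmin : IsLocalMin (fun t : ℝ => sonObjective a lam (fun i => x i + t • c i • v)) 0 := by
      refine Filter.Eventually.of_forall fun t => ?_
      simpa using hx (fun i => x i + t • c i • v)
    have h0 := hmin.hasDerivAt_eq_zero hd
    rw [aux_sym c W hW, ← Finset.mul_sum] at h0
    have s1 : ∑ i, c i * inner ℝ (x i - a i) v = ∑ i ∈ C, inner ℝ (xhat - a i) v := by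
      simp only [c, ite_mul, one_mul, zero_mul, Finset.sum_ite_mem, Finset.univ_inter]
      exact Finset.sum_congr rfl fun i hi => by rw [hin i hi]
    have s2 : ∑ i, ∑ j, c i * W i j = (C.card : ℝ) * inner ℝ U v := by
      simp only [← Finset.mul_sum]
      simp only [c, ite_mul, one_mul, zero_mul, Finset.sum_ite_mem, Finset.univ_inter]
      rw [← nsmul_eq_mul]
      refine Finset.sum_eq_card_nsmul fun i hi => ?_
      rw [← Finset.sum_add_sum_compl C, Finset.sum_eq_zero, zero_add, hU, sum_inner]
      · refine Finset.sum_congr rfl fun j _ => ?_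
        simp only [W, hin i hi, real_inner_smul_left]
      · intro j hj
        simp [W, hin i hi, hin j hj]
    rw [s1, s2] at h0
    linarith
  have hz : (∑ i ∈ C, (xhat - a i)) + lam • (C.card : ℝ) • U = 0 := by
    refine ext_inner_right ℝ fun v => ?_
    rw [inner_add_left, sum_inner, real_inner_smul_left, real_inner_smul_left, inner_zero_left]
    exact key v
  rw [Finset.sum_sub_distrib, Finset.sum_const, ← Nat.cast_smul_eq_nsmul ℝ] at hz
  have hs : ∑ l ∈ C, a l = (C.card : ℝ) • (xhat + lam • U) := by
    rw [← sub_eq_zero, ← neg_eq_zero, ← hz]; module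
  rw [hs, inv_smul_smul₀ hk]
  module
end
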